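/- If (C_n)_{n∈ℕ} is a sequence of subsets of Baire space ℕ^ℕ each of which is continuously reducible to Y, then the intersection ⋂_{n∈ℕ} C_n is continuously reducible to Y. -/

import Mathlib

/-- `ℚ` is regarded as carrying the *discrete* topology, so that `N → ℚ` carries the
product topology with discrete factors. -/
instance (priority := high) discreteRatTopology : TopologicalSpace ℚ := ⊥

/-- A rational-valued norm on the ℚ-vector space `N = ℕ →₀ ℚ` of finitely supported
functions from `ℕ` to `ℚ`. -/
structure IsRatNorm (p : (ℕ →₀ ℚ) → ℚ) : Prop where
  nonneg : ∀ v, 0 ≤ p v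
  eq_zero_iff : ∀ v, p v = 0 ↔ v = 0
  smul_eq : ∀ (q : ℚ) (v), p (q • v) = |q| * p v
  add_le : ∀ v w, p (v + w) ≤ p v + p w

/-- The space `X` of pairs `(p, F)` where `p` is a rational norm on `N` and `F` is a
ℚ-linear functional with `|F v| ≤ p v`, topologized as a subspace of
`(N → ℚ) × (N → ℚ)` (with `ℚ` discrete). -/
def Xspace : Type :=
  {pF : ((ℕ →₀ ℚ) → ℚ) × ((ℕ →₀ ℚ) → ℚ) //
    IsRatNorm pF.1 ∧ IsLinearMap ℚ pF.2 ∧ ∀ v, |pF.2 v| ≤ pF.1 v}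

instance : TopologicalSpace Xspace := instTopologicalSpaceSubtype

/-- A sequence in `N` is Cauchy with respect to the rational norm `p`. -/
def IsCauchyWrt (p : (ℕ →₀ ℚ) → ℚ) (v : ℕ → ℕ →₀ ℚ) : Prop :=
  ∀ ε : ℚ, 0 < ε → ∃ K, ∀ m k, K ≤ m → K ≤ k → p (v m - v k) < ε

/-- The set `Y ⊆ X` of pairs `(p, F)` such that `F` attains its norm in the completion of
`(N, p)`: there is a `p`-Cauchy sequence `(v k)` with `p (v k) → 1` and `F (v k) → 1`. -/
def Yset : Set Xspace :=
  {x | ∃ v : ℕ → (ℕ →₀ ℚ), IsCauchyWrt x.val.1 v ∧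
    (∀ ε : ℚ, 0 < ε → ∃ K, ∀ k, K ≤ k → |x.val.1 (v k) - 1| < ε) ∧
    (∀ ε : ℚ, 0 < ε → ∃ K, ∀ k, K ≤ k → |x.val.2 (v k) - 1| < ε)}

/-- A subset `C` of Baire space `ℕ → ℕ` is continuously reducible to `Y`. -/
def ContReducibleToY (C : Set (ℕ → ℕ)) : Prop :=
  ∃ φ : (ℕ → ℕ) → Xspace, Continuous φ ∧ ∀ x, x ∈ C ↔ φ x ∈ Yset

open Finset

instance : DiscreteTopology ℚ := ⟨rfl⟩

/-- The weights `2⁻¹, 2⁻², 2⁻³, …`. -/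
def dyadicWeight (n : ℕ) : ℚ := (1 / 2) ^ (n + 1)

lemma dyadicWeight_pos (n : ℕ) : 0 < dyadicWeight n := by
  unfold dyadicWeight; positivity

lemma dyadicWeight_add (m n : ℕ) : dyadicWeight (m + n) = (1 / 2) ^ m * dyadicWeight n := by
  unfold dyadicWeight; ring

lemma sum_dyadicWeight (M : ℕ) : ∑ n ∈ range M, dyadicWeight n = 1 - (1 / 2) ^ M := by
  induction M with
  | zero => simp
  | succ k ih => rw [sum_range_succ, ih, dyadicWeight]; ring

lemma sum_dyadicWeight_le_one (M : ℕ) : ∑ n ∈ range M, dyadicWeight n ≤ 1 := by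
  rw [sum_dyadicWeight]
  have : (0 : ℚ) < (1 / 2) ^ M := by positivity
  linarith

lemma exists_forall_mul_half_pow_lt (c : ℚ) (hc : 0 < c) {ε : ℚ} (hε : 0 < ε) :
    ∃ K : ℕ, ∀ k, K ≤ k → c * (1 / 2) ^ k < ε := by
  obtain ⟨K, hK⟩ := exists_pow_lt_of_lt_one (div_pos hε hc) (by norm_num : (1 / 2 : ℚ) < 1)
  refine ⟨K, fun k hk => ?_⟩
  have h1 : (1 / 2 : ℚ) ^ k ≤ (1 / 2) ^ K :=
    pow_le_pow_of_le_one (by norm_num) (by norm_num) hk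
  have h2 := (lt_div_iff₀ hc).1 (lt_of_le_of_lt h1 hK)
  linarith

lemma abs_weighted_sum_sub_one_le (a : ℕ → ℚ) (M : ℕ) (δ : ℚ) (hδ : 0 ≤ δ)
    (h : ∀ n < M, |a n - 1| ≤ δ) :
    |∑ n ∈ range M, dyadicWeight n * a n - 1| ≤ δ + (1 / 2) ^ M := by
  have h1 : ∑ n ∈ range M, dyadicWeight n * a n - 1
      = ∑ n ∈ range M, dyadicWeight n * (a n - 1) - (1 / 2) ^ M := by
    simp only [mul_sub, mul_one, sum_sub_distrib, sum_dyadicWeight]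
    ring
  have h2 : |∑ n ∈ range M, dyadicWeight n * (a n - 1)| ≤ δ := by
    calc |∑ n ∈ range M, dyadicWeight n * (a n - 1)|
        ≤ ∑ n ∈ range M, |dyadicWeight n * (a n - 1)| := abs_sum_le_sum_abs _ _
      _ ≤ ∑ n ∈ range M, dyadicWeight n * δ := by
          refine sum_le_sum fun n hn => ?_
          rw [abs_mul, abs_of_pos (dyadicWeight_pos n)]
          exact mul_le_mul_of_nonneg_left (h n (mem_range.1 hn)) (dyadicWeight_pos n).le
      _ = (∑ n ∈ range M, dyadicWeight n) * δ := (sum_mul _ _ _).symm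
      _ ≤ δ := mul_le_of_le_one_left hδ (sum_dyadicWeight_le_one M)
  have h3 : (0 : ℚ) < (1 / 2) ^ M := by positivity
  rw [h1]
  rw [abs_le] at h2 ⊢
  constructor <;> linarith

lemma sum_range_eq_of_eventually_zero (f : ℕ → ℚ) {M M' : ℕ} (h : ∀ n, M ≤ n → f n = 0)
    (h' : ∀ n, M' ≤ n → f n = 0) : ∑ n ∈ range M, f n = ∑ n ∈ range M', f n := by
  have key : ∀ {A B : ℕ}, A ≤ B → (∀ n, A ≤ n → f n = 0) →
      ∑ n ∈ range A, f n = ∑ n ∈ range B, f n := fun hAB hA =>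
    sum_subset (range_mono hAB) fun n _ hn => hA n (by simpa using hn)
  rcases le_total M M' with hM | hM
  · exact key hM h
  · exact (key hM h').symm

/-- The total excess of the coordinates of `t` over their dyadic share of the sum. -/
def dyadicExcess (M : ℕ) (t : ℕ → ℚ) : ℚ :=
  ∑ n ∈ range M, max 0 (t n - dyadicWeight n * ∑ m ∈ range M, t m)

lemma dyadicExcess_nonneg (M : ℕ) (t : ℕ → ℚ) : 0 ≤ dyadicExcess M t :=
  sum_nonneg fun _ _ => le_max_left _ _

lemma sum_add_dyadicExcess (M : ℕ) (t : ℕ → ℚ) :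
    ∑ n ∈ range M, t n + dyadicExcess M t =
      ∑ n ∈ range M, max (dyadicWeight n * ∑ m ∈ range M, t m) (t n)
        + (1 / 2) ^ M * ∑ n ∈ range M, t n := by
  set S := ∑ n ∈ range M, t n with hS
  have h : ∀ n, max (dyadicWeight n * S) (t n)
      = dyadicWeight n * S + max 0 (t n - dyadicWeight n * S) := fun n => by
    rw [← max_add_add_left]; simp
  simp only [h, sum_add_distrib, ← sum_mul, sum_dyadicWeight, dyadicExcess, ← hS]
  ring

lemma sum_add_dyadicExcess_subadditive (M : ℕ) (s t u : ℕ → ℚ) (h : ∀ n, u n ≤ s n + t n) :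
    ∑ n ∈ range M, u n + dyadicExcess M u ≤
      (∑ n ∈ range M, s n + dyadicExcess M s) + (∑ n ∈ range M, t n + dyadicExcess M t) := by
  have hS : ∑ n ∈ range M, u n ≤ ∑ n ∈ range M, s n + ∑ n ∈ range M, t n := by
    rw [← sum_add_distrib]; exact sum_le_sum fun n _ => h n
  simp only [sum_add_dyadicExcess]
  have h1 : ∑ n ∈ range M, max (dyadicWeight n * ∑ m ∈ range M, u m) (u n) ≤
      ∑ n ∈ range M, max (dyadicWeight n * ∑ m ∈ range M, s m) (s n) +
      ∑ n ∈ range M, max (dyadicWeight n * ∑ m ∈ range M, t m) (t n) := by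
    rw [← sum_add_distrib]
    refine sum_le_sum fun n _ => max_le ?_ ?_
    · refine (mul_le_mul_of_nonneg_left hS (dyadicWeight_pos n).le).trans ?_
      rw [mul_add]
      exact add_le_add (le_max_left _ _) (le_max_left _ _)
    · exact (h n).trans (add_le_add (le_max_right _ _) (le_max_right _ _))
  have h2 := mul_le_mul_of_nonneg_left hS (by positivity : (0 : ℚ) ≤ (1 / 2) ^ M)
  linarith

lemma dyadicExcess_le_sum (M : ℕ) (t : ℕ → ℚ) (h : ∀ n, 0 ≤ t n) :
    dyadicExcess M t ≤ ∑ n ∈ range M, t n := by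
  have hS : 0 ≤ ∑ n ∈ range M, t n := sum_nonneg fun n _ => h n
  refine sum_le_sum fun n _ => max_le (h n) ?_
  have := mul_nonneg (dyadicWeight_pos n).le hS
  linarith

lemma abs_sub_dyadicWeight_mul_sum_le (M : ℕ) (t : ℕ → ℚ) (h : ∀ n, 0 ≤ t n) {k : ℕ}
    (hk : k < M) :
    |t k - dyadicWeight k * ∑ n ∈ range M, t n| ≤ dyadicExcess M t := by
  set S := ∑ n ∈ range M, t n with hS
  have hS0 : 0 ≤ S := sum_nonneg fun n _ => h n
  have hkm : k ∈ range M := mem_range.2 hk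
  have hupper : t k - dyadicWeight k * S ≤ dyadicExcess M t :=
    (le_max_right 0 _).trans
      (single_le_sum (f := fun n => max 0 (t n - dyadicWeight n * S))
        (fun _ _ => le_max_left _ _) hkm)
  have h1 : ∑ n ∈ (range M).erase k, (t n - dyadicWeight n * S) ≤ dyadicExcess M t := by
    refine (sum_le_sum fun n _ => le_max_right 0 _).trans ?_
    exact sum_le_sum_of_subset_of_nonneg (erase_subset _ _) fun _ _ _ => le_max_left _ _
  have h2 := sum_erase_add (range M) (fun n => t n - dyadicWeight n * S) hkm
  have h3 : ∑ n ∈ range M, (t n - dyadicWeight n * S) = (1 / 2) ^ M * S := by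
    rw [sum_sub_distrib, ← sum_mul, sum_dyadicWeight, ← hS]; ring
  have h4 : 0 ≤ (1 / 2) ^ M * S := by positivity
  rw [abs_le]
  constructor <;> linarith

lemma IsRatNorm.map_zero {p : (ℕ →₀ ℚ) → ℚ} (hp : IsRatNorm p) : p 0 = 0 :=
  (hp.eq_zero_iff 0).2 rfl

lemma IsRatNorm.sub_le {p : (ℕ →₀ ℚ) → ℚ} (hp : IsRatNorm p) (v w : ℕ →₀ ℚ) :
    p (v - w) ≤ p v + p w := by
  have h := hp.add_le v ((-1 : ℚ) • w)
  rw [hp.smul_eq] at h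
  simpa [sub_eq_add_neg] using h

lemma pair_left_injective (n : ℕ) : Function.Injective (Nat.pair n) := fun _ _ h =>
  (Nat.pair_eq_pair.1 h).2

/-- The `n`-th component of a vector under the identification `ℕ × ℕ ≃ ℕ` of index sets. -/
noncomputable def block (n : ℕ) : (ℕ →₀ ℚ) →ₗ[ℚ] (ℕ →₀ ℚ) :=
  Finsupp.lcomapDomain (Nat.pair n) (pair_left_injective n)

/-- The inclusion of the `n`-th component. -/
noncomputable def blockIncl (n : ℕ) : (ℕ →₀ ℚ) →ₗ[ℚ] (ℕ →₀ ℚ) :=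
  Finsupp.lmapDomain ℚ ℚ (Nat.pair n)

lemma block_apply (n : ℕ) (v : ℕ →₀ ℚ) (i : ℕ) : block n v i = v (Nat.pair n i) := rfl

lemma block_blockIncl (m n : ℕ) (v : ℕ →₀ ℚ) :
    block m (blockIncl n v) = if m = n then v else 0 := by
  ext i
  rw [block_apply, blockIncl, Finsupp.lmapDomain_apply]
  split_ifs with h
  · subst h
    exact Finsupp.mapDomain_apply (pair_left_injective m) v i
  · refine Finsupp.mapDomain_of_notMem_range _ _ ?_
    rintro ⟨j, hj⟩
    exact h (Nat.pair_eq_pair.1 hj).1.symm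

lemma eq_zero_of_block_eq_zero {v : ℕ →₀ ℚ} (h : ∀ n, block n v = 0) : v = 0 := by
  ext i
  have := DFunLike.congr_fun (h i.unpair.1) i.unpair.2
  simpa [block_apply] using this

/-- A bound on the indices of the nonzero components of `v`. -/
def blockBound (v : ℕ →₀ ℚ) : ℕ := v.support.sup id + 1

lemma block_eq_zero_of_blockBound_le {v : ℕ →₀ ℚ} {n : ℕ} (h : blockBound v ≤ n) :
    block n v = 0 := by
  ext i
  rw [block_apply, Finsupp.coe_zero, Pi.zero_apply]
  by_contra hne
  have h1 : Nat.pair n i ≤ v.support.sup id :=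
    le_sup (f := id) (Finsupp.mem_support_iff.2 hne)
  have h2 := Nat.left_le_pair n i
  unfold blockBound at h
  omega

/-- The `ℓ¹`-sum of a sequence of functions on the components. -/
noncomputable def blockSum (f : ℕ → (ℕ →₀ ℚ) → ℚ) (v : ℕ →₀ ℚ) : ℚ :=
  ∑ n ∈ range (blockBound v), f n (block n v)

/-- The `ℓ¹`-sum of the norms `p n`, increased by the dyadic excess of the component norms. -/
noncomputable def glueNorm (p : ℕ → (ℕ →₀ ℚ) → ℚ) (v : ℕ →₀ ℚ) : ℚ :=
  blockSum p v + dyadicExcess (blockBound v) fun n => p n (block n v)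

section Glue

variable {f p : ℕ → (ℕ →₀ ℚ) → ℚ}

lemma blockSum_eq (hf : ∀ n, f n 0 = 0) {v : ℕ →₀ ℚ} {M : ℕ}
    (hM : ∀ n, M ≤ n → block n v = 0) : blockSum f v = ∑ n ∈ range M, f n (block n v) :=
  sum_range_eq_of_eventually_zero _
    (fun n hn => by rw [block_eq_zero_of_blockBound_le hn, hf])
    (fun n hn => by rw [hM n hn, hf])

lemma glueNorm_eq (hp : ∀ n, IsRatNorm (p n)) {v : ℕ →₀ ℚ} {M : ℕ}
    (hM : ∀ n, M ≤ n → block n v = 0) :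
    glueNorm p v = ∑ n ∈ range M, p n (block n v) + dyadicExcess M fun n => p n (block n v) := by
  have hS := blockSum_eq (fun n => (hp n).map_zero) hM
  have hpos : 0 ≤ blockSum p v := sum_nonneg fun n _ => (hp n).nonneg _
  have hzero : ∀ n, block n v = 0 →
      max 0 (p n (block n v) - dyadicWeight n * blockSum p v) = 0 := fun n hn => by
    rw [hn, (hp n).map_zero, zero_sub]
    exact max_eq_left (neg_nonpos.2 (mul_nonneg (dyadicWeight_pos n).le hpos))
  unfold glueNorm dyadicExcess
  rw [← hS]
  congr 1
  exact sum_range_eq_of_eventually_zero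
    (fun n => max 0 (p n (block n v) - dyadicWeight n * blockSum p v))
    (fun n hn => hzero n (block_eq_zero_of_blockBound_le hn)) (fun n hn => hzero n (hM n hn))

lemma le_blockSum (hp : ∀ n, IsRatNorm (p n)) (v : ℕ →₀ ℚ) (n : ℕ) :
    p n (block n v) ≤ blockSum p v := by
  rw [blockSum_eq (M := blockBound v + n + 1) (fun n => (hp n).map_zero)
    fun m hm => block_eq_zero_of_blockBound_le (by omega)]
  exact single_le_sum (f := fun n => p n (block n v)) (fun m _ => (hp m).nonneg _)
    (mem_range.2 (by omega))

lemma blockSum_le_glueNorm (v : ℕ →₀ ℚ) : blockSum p v ≤ glueNorm p v :=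
  le_add_of_nonneg_right (dyadicExcess_nonneg _ _)

lemma glueNorm_le_two_mul_blockSum (hp : ∀ n, IsRatNorm (p n)) (v : ℕ →₀ ℚ) :
    glueNorm p v ≤ 2 * blockSum p v := by
  have : dyadicExcess (blockBound v) (fun n => p n (block n v)) ≤ blockSum p v :=
    dyadicExcess_le_sum _ _ fun n => (hp n).nonneg _
  unfold glueNorm
  linarith

lemma abs_sub_dyadicWeight_mul_blockSum_le (hp : ∀ n, IsRatNorm (p n)) (v : ℕ →₀ ℚ) (k : ℕ) :
    |p k (block k v) - dyadicWeight k * blockSum p v| ≤ glueNorm p v - blockSum p v := by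
  have hM : ∀ n, blockBound v + k + 1 ≤ n → block n v = 0 := fun n hn =>
    block_eq_zero_of_blockBound_le (by omega)
  rw [glueNorm_eq hp hM, blockSum_eq (fun n => (hp n).map_zero) hM, add_sub_cancel_left]
  exact abs_sub_dyadicWeight_mul_sum_le _ (fun n => p n (block n v))
    (fun n => (hp n).nonneg _) (by omega)

lemma isRatNorm_glueNorm (hp : ∀ n, IsRatNorm (p n)) : IsRatNorm (glueNorm p) where
  nonneg v := add_nonneg (sum_nonneg fun n _ => (hp n).nonneg _) (dyadicExcess_nonneg _ _)
  eq_zero_iff v := by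
    constructor
    · intro h
      refine eq_zero_of_block_eq_zero fun n => ((hp n).eq_zero_iff _).1 ?_
      exact le_antisymm (((le_blockSum hp v n).trans (blockSum_le_glueNorm v)).trans h.le)
        ((hp n).nonneg _)
    · rintro rfl
      rw [glueNorm_eq hp (M := 0) fun n _ => _root_.map_zero _]
      simp [dyadicExcess]
  smul_eq q v := by
    have hM : ∀ n, blockBound v ≤ n → block n (q • v) = 0 := fun n hn => by
      rw [map_smul, block_eq_zero_of_blockBound_le hn, smul_zero]
    rw [glueNorm_eq hp hM, glueNorm, blockSum, dyadicExcess, dyadicExcess, mul_add]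
    simp only [map_smul, (hp _).smul_eq, ← mul_sum]
    congr 1
    refine (sum_congr rfl fun n _ => ?_).trans (mul_sum _ _ _).symm
    rw [mul_max_of_nonneg _ _ (abs_nonneg q), mul_zero]
    congr 1
    ring
  add_le v w := by
    have hv : ∀ n, blockBound v + blockBound w ≤ n → block n v = 0 := fun n hn =>
      block_eq_zero_of_blockBound_le (by omega)
    have hw : ∀ n, blockBound v + blockBound w ≤ n → block n w = 0 := fun n hn =>
      block_eq_zero_of_blockBound_le (by omega)
    have hvw : ∀ n, blockBound v + blockBound w ≤ n → block n (v + w) = 0 := fun n hn => by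
      rw [map_add, hv n hn, hw n hn, add_zero]
    rw [glueNorm_eq hp hv, glueNorm_eq hp hw, glueNorm_eq hp hvw]
    refine sum_add_dyadicExcess_subadditive _ _ _ _ fun n => ?_
    rw [map_add]
    exact (hp n).add_le _ _

lemma isLinearMap_blockSum (hf : ∀ n, IsLinearMap ℚ (f n)) : IsLinearMap ℚ (blockSum f) where
  map_add v w := by
    have hv : ∀ n, blockBound v + blockBound w ≤ n → block n v = 0 := fun n hn =>
      block_eq_zero_of_blockBound_le (by omega)
    have hw : ∀ n, blockBound v + blockBound w ≤ n → block n w = 0 := fun n hn =>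
      block_eq_zero_of_blockBound_le (by omega)
    have hvw : ∀ n, blockBound v + blockBound w ≤ n → block n (v + w) = 0 := fun n hn => by
      rw [map_add, hv n hn, hw n hn, add_zero]
    have h0 := fun n => (hf n).map_zero
    rw [blockSum_eq h0 hv, blockSum_eq h0 hw, blockSum_eq h0 hvw, ← sum_add_distrib]
    exact sum_congr rfl fun n _ => by rw [map_add, (hf n).map_add]
  map_smul q v := by
    have hM : ∀ n, blockBound v ≤ n → block n (q • v) = 0 := fun n hn => by
      rw [map_smul, block_eq_zero_of_blockBound_le hn, smul_zero]
    rw [blockSum_eq (fun n => (hf n).map_zero) hM, blockSum, smul_eq_mul, mul_sum]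
    exact sum_congr rfl fun n _ => by rw [map_smul, (hf n).map_smul, smul_eq_mul]

lemma abs_blockSum_le (h : ∀ n v, |f n v| ≤ p n v) (v : ℕ →₀ ℚ) :
    |blockSum f v| ≤ blockSum p v :=
  (abs_sum_le_sum_abs _ _).trans (sum_le_sum fun n _ => h n _)

end Glue

/-- The pair glued from a sequence of pairs in `Xspace`. -/
noncomputable def glue (x : ℕ → Xspace) : Xspace :=
  ⟨(glueNorm fun n => (x n).val.1, blockSum fun n => (x n).val.2),
    isRatNorm_glueNorm fun n => (x n).property.1,
    isLinearMap_blockSum fun n => (x n).property.2.1,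
    fun v => (abs_blockSum_le (fun n => (x n).property.2.2) v).trans (blockSum_le_glueNorm v)⟩

lemma continuous_glue : Continuous glue := by
  have hp : ∀ n v, Continuous fun x : ℕ → Xspace => (x n).val.1 v := fun n v =>
    (continuous_apply v).comp
      (continuous_fst.comp (continuous_subtype_val.comp (continuous_apply n)))
  have hF : ∀ n v, Continuous fun x : ℕ → Xspace => (x n).val.2 v := fun n v =>
    (continuous_apply v).comp
      (continuous_snd.comp (continuous_subtype_val.comp (continuous_apply n)))
  have hmax : Continuous fun q : ℚ => max 0 q := continuous_of_discreteTopology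
  refine Continuous.subtype_mk (Continuous.prodMk ?_ ?_) _
  · refine continuous_pi fun v => ?_
    have hS : Continuous fun x : ℕ → Xspace =>
        ∑ n ∈ range (blockBound v), (x n).val.1 (block n v) :=
      continuous_finsetSum _ fun n _ => hp n _
    exact hS.add (continuous_finsetSum _ fun n _ =>
      hmax.comp ((hp n _).sub (continuous_const.mul hS)))
  · exact continuous_pi fun v => continuous_finsetSum _ fun n _ => hF n _

lemma mem_Yset_of_glue_mem {x : ℕ → Xspace} (h : glue x ∈ Yset) (k : ℕ) : x k ∈ Yset := by
  obtain ⟨w, hc, hp1, hF1⟩ := h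
  let P : ℕ → (ℕ →₀ ℚ) → ℚ := fun n => (x n).val.1
  let F : ℕ → (ℕ →₀ ℚ) → ℚ := fun n => (x n).val.2
  have hp : ∀ n, IsRatNorm (P n) := fun n => (x n).property.1
  have hlin : IsLinearMap ℚ (F k) := (x k).property.2.1
  change IsCauchyWrt (glueNorm P) w at hc
  change ∀ ε : ℚ, 0 < ε → ∃ K, ∀ k, K ≤ k → |glueNorm P (w k) - 1| < ε at hp1
  change ∀ ε : ℚ, 0 < ε → ∃ K, ∀ k, K ≤ k → |blockSum F (w k) - 1| < ε at hF1
  have hb := dyadicWeight_pos k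
  have hb1 : dyadicWeight k ≤ 1 := pow_le_one₀ (by norm_num) (by norm_num)
  -- control of the `k`-th component by the glued pair
  have hcomp : ∀ (v : ℕ →₀ ℚ) (δ : ℚ), |glueNorm P v - 1| < δ → |blockSum F v - 1| < δ →
      |P k (block k v) - dyadicWeight k| < 3 * δ ∧ |F k (block k v) - dyadicWeight k| < 5 * δ := by
    intro v δ h1 h2
    have hex := abs_sub_dyadicWeight_mul_blockSum_le hp v k
    have hSP : blockSum P v ≤ glueNorm P v := blockSum_le_glueNorm v
    have hFS : blockSum F v ≤ blockSum P v :=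
      (le_abs_self _).trans (abs_blockSum_le (fun n => (x n).property.2.2) v)
    have hFP : F k (block k v) ≤ P k (block k v) :=
      (le_abs_self _).trans ((x k).property.2.2 _)
    have hdiff : P k (block k v) - F k (block k v) ≤ blockSum P v - blockSum F v := by
      have hM : ∀ n, blockBound v + k + 1 ≤ n → block n v = 0 := fun n hn =>
        block_eq_zero_of_blockBound_le (by omega)
      rw [blockSum_eq (fun n => (hp n).map_zero) hM,
        blockSum_eq (f := F) (fun n => (x n).property.2.1.map_zero) hM, ← sum_sub_distrib]
      exact single_le_sum (f := fun n => P n (block n v) - F n (block n v))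
        (fun n _ => sub_nonneg.2 ((le_abs_self _).trans ((x n).property.2.2 _)))
        (mem_range.2 (by omega))
    rw [abs_lt] at h1 h2
    have h3 : |dyadicWeight k * (blockSum P v - 1)| < δ := by
      rw [abs_mul, abs_of_pos hb]
      refine lt_of_le_of_lt (mul_le_of_le_one_left (abs_nonneg _) hb1) ?_
      rw [abs_lt]; constructor <;> linarith
    rw [mul_sub, mul_one] at h3
    rw [abs_lt] at h3
    rw [abs_le] at hex
    constructor <;> rw [abs_lt] <;> constructor <;> linarith
  have hscale : ∀ a : ℚ, (dyadicWeight k)⁻¹ * a - 1 = (dyadicWeight k)⁻¹ * (a - dyadicWeight k) :=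
    fun a => by field_simp
  have hlt : ∀ a ε : ℚ, |a - dyadicWeight k| < dyadicWeight k * ε →
      |(dyadicWeight k)⁻¹ * a - 1| < ε := fun a ε h => by
    rw [hscale, abs_mul, abs_of_pos (inv_pos.2 hb)]
    exact (inv_mul_lt_iff₀ hb).2 h
  have hconv : ∀ ε : ℚ, 0 < ε → ∃ K, ∀ j, K ≤ j →
      |P k (block k (w j)) - dyadicWeight k| < dyadicWeight k * ε ∧
      |F k (block k (w j)) - dyadicWeight k| < dyadicWeight k * ε := by
    intro ε hε
    have hδ : 0 < dyadicWeight k * ε / 5 := by positivity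
    obtain ⟨K₁, hK₁⟩ := hp1 _ hδ
    obtain ⟨K₂, hK₂⟩ := hF1 _ hδ
    refine ⟨max K₁ K₂, fun j hj => ?_⟩
    obtain ⟨h1, h2⟩ := hcomp (w j) _ (hK₁ j (le_of_max_le_left hj)) (hK₂ j (le_of_max_le_right hj))
    constructor <;> linarith
  refine ⟨fun j => (dyadicWeight k)⁻¹ • block k (w j), ?_, ?_, ?_⟩
  · intro ε hε
    obtain ⟨K, hK⟩ := hc (dyadicWeight k * ε) (by positivity)
    refine ⟨K, fun i j hi hj => ?_⟩
    change P k _ < ε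
    rw [← smul_sub, (hp k).smul_eq, ← map_sub, abs_of_pos (inv_pos.2 hb), inv_mul_lt_iff₀ hb]
    exact ((le_blockSum hp _ k).trans (blockSum_le_glueNorm _)).trans_lt (hK i j hi hj)
  · intro ε hε
    obtain ⟨K, hK⟩ := hconv ε hε
    refine ⟨K, fun j hj => ?_⟩
    change |P k _ - 1| < ε
    rw [(hp k).smul_eq, abs_of_pos (inv_pos.2 hb)]
    exact hlt _ _ (hK j hj).1
  · intro ε hε
    obtain ⟨K, hK⟩ := hconv ε hε
    refine ⟨K, fun j hj => ?_⟩
    change |F k _ - 1| < ε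
    rw [hlin.map_smul]
    exact hlt _ _ (hK j hj).2

/-- Membership in `Yset` is witnessed by a sequence with explicit rates of convergence. -/
lemma exists_fast_of_mem_Yset {x : Xspace} (h : x ∈ Yset) :
    ∃ v : ℕ → (ℕ →₀ ℚ), (∀ K i j, K ≤ i → K ≤ j → x.val.1 (v i - v j) ≤ (1 / 2) ^ K) ∧
      (∀ j, |x.val.1 (v j) - 1| ≤ (1 / 2) ^ j) ∧ ∀ j, |x.val.2 (v j) - 1| ≤ (1 / 2) ^ j := by
  obtain ⟨v, hc, hp, hF⟩ := h
  have hpow : ∀ K : ℕ, (0 : ℚ) < (1 / 2) ^ K := fun K => by positivity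
  choose A hA using fun K => hc _ (hpow K)
  choose B hB using fun K => hp _ (hpow K)
  choose D hD using fun K => hF _ (hpow K)
  let g : ℕ → ℕ := fun j => (range (j + 1)).sup fun i => A i + B i + D i
  have hg : ∀ i j, i ≤ j → A i + B i + D i ≤ g j := fun i j hij =>
    le_sup (f := fun i => A i + B i + D i) (mem_range.2 (by omega))
  refine ⟨fun j => v (g j), fun K i j hi hj => (hA K _ _ ?_ ?_).le, fun j => (hB j _ ?_).le,
    fun j => (hD j _ ?_).le⟩
  · have := hg K i hi; omega
  · have := hg K j hj; omega
  · have := hg j j le_rfl; omega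
  · have := hg j j le_rfl; omega

lemma glue_mem_Yset {x : ℕ → Xspace} (h : ∀ n, x n ∈ Yset) : glue x ∈ Yset := by
  choose v hc hp1 hF1 using fun n => exists_fast_of_mem_Yset (h n)
  let P : ℕ → (ℕ →₀ ℚ) → ℚ := fun n => (x n).val.1
  let F : ℕ → (ℕ →₀ ℚ) → ℚ := fun n => (x n).val.2
  have hp : ∀ n, IsRatNorm (P n) := fun n => (x n).property.1
  have hlin : ∀ n, IsLinearMap ℚ (F n) := fun n => (x n).property.2.1
  replace hc : ∀ n K i j, K ≤ i → K ≤ j → P n (v n i - v n j) ≤ (1 / 2) ^ K := hc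
  replace hp1 : ∀ n j, |P n (v n j) - 1| ≤ (1 / 2) ^ j := hp1
  replace hF1 : ∀ n j, |F n (v n j) - 1| ≤ (1 / 2) ^ j := hF1
  let w : ℕ → (ℕ →₀ ℚ) := fun j => ∑ n ∈ range j, dyadicWeight n • blockIncl n (v n j)
  have hw : ∀ m j, block m (w j) = if m < j then dyadicWeight m • v m j else 0 := by
    intro m j
    simp only [w, map_sum, map_smul, block_blockIncl, smul_ite, smul_zero]
    simp
  have hzero : ∀ j n, j ≤ n → block n (w j) = 0 := fun j n hn => by
    rw [hw, if_neg (by omega)]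
  have hPw : ∀ j, ∀ n < j, P n (block n (w j)) = dyadicWeight n * P n (v n j) := fun j n hn => by
    rw [hw, if_pos hn, (hp n).smul_eq, abs_of_pos (dyadicWeight_pos n)]
  have hSw : ∀ j, |blockSum P (w j) - 1| ≤ 2 * (1 / 2) ^ j := fun j => by
    rw [blockSum_eq (fun n => (hp n).map_zero) (hzero j),
      sum_congr rfl fun n hn => hPw j n (mem_range.1 hn)]
    refine (abs_weighted_sum_sub_one_le (fun n => P n (v n j)) j ((1 / 2) ^ j) (by positivity)
      fun n _ => hp1 n j).trans (by linarith)
  have hFw : ∀ j, |blockSum F (w j) - 1| ≤ 2 * (1 / 2) ^ j := fun j => by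
    rw [blockSum_eq (fun n => (hlin n).map_zero) (hzero j),
      sum_congr rfl fun n hn => show F n (block n (w j)) = dyadicWeight n * F n (v n j) by
        rw [hw, if_pos (mem_range.1 hn), (hlin n).map_smul, smul_eq_mul]]
    refine (abs_weighted_sum_sub_one_le (fun n => F n (v n j)) j ((1 / 2) ^ j) (by positivity)
      fun n _ => hF1 n j).trans (by linarith)
  have hGw : ∀ j, |glueNorm P (w j) - 1| ≤ 5 * (1 / 2) ^ j := by
    intro j
    have hS := hSw j
    have hle : blockSum P (w j) ≤ glueNorm P (w j) := blockSum_le_glueNorm _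
    have hpos : (0 : ℚ) < (1 / 2) ^ j := by positivity
    rw [abs_le] at hS
    have hex : glueNorm P (w j) - blockSum P (w j) ≤ 3 * (1 / 2) ^ j := by
      have hSe := blockSum_eq (fun n => (hp n).map_zero) (hzero j)
      rw [glueNorm_eq hp (hzero j), hSe, add_sub_cancel_left, dyadicExcess, ← hSe]
      calc _ ≤ ∑ n ∈ range j, dyadicWeight n * (3 * (1 / 2) ^ j) := by
            refine sum_le_sum fun n hn => max_le
              (mul_nonneg (dyadicWeight_pos n).le (by positivity)) ?_
            rw [hPw j n (mem_range.1 hn), ← mul_sub]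
            refine mul_le_mul_of_nonneg_left ?_ (dyadicWeight_pos n).le
            have h1 : P n (v n j) - 1 ≤ (1 / 2) ^ j := (le_abs_self _).trans (hp1 n j)
            linarith
        _ = (∑ n ∈ range j, dyadicWeight n) * (3 * (1 / 2) ^ j) := (sum_mul _ _ _).symm
        _ ≤ _ := mul_le_of_le_one_left (by positivity) (sum_dyadicWeight_le_one j)
    rw [abs_le]
    constructor <;> linarith
  have hbound : ∀ n j, P n (block n (w j)) ≤ dyadicWeight n * 2 := by
    intro n j
    rw [hw]
    split_ifs with hn
    · rw [(hp n).smul_eq, abs_of_pos (dyadicWeight_pos n)]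
      refine mul_le_mul_of_nonneg_left ?_ (dyadicWeight_pos n).le
      have h1 : P n (v n j) - 1 ≤ (1 / 2) ^ j := (le_abs_self _).trans (hp1 n j)
      have h2 : ((1 : ℚ) / 2) ^ j ≤ 1 := pow_le_one₀ (by norm_num) (by norm_num)
      linarith
    · rw [(hp n).map_zero]
      exact mul_nonneg (dyadicWeight_pos n).le (by norm_num)
  have hCw : ∀ K i j, K ≤ i → K ≤ j → glueNorm P (w i - w j) ≤ 10 * (1 / 2) ^ K := by
    intro K i j hi hj
    have hM : ∀ n, K + (i + j) ≤ n → block n (w i - w j) = 0 := fun n hn => by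
      rw [map_sub, hzero i n (by omega), hzero j n (by omega), sub_zero]
    have h1 : ∑ n ∈ range K, P n (block n (w i - w j)) ≤ (1 / 2) ^ K := by
      calc _ ≤ ∑ n ∈ range K, dyadicWeight n * (1 / 2) ^ K := by
            refine sum_le_sum fun n hn => ?_
            have hnK := mem_range.1 hn
            rw [map_sub, hw, hw, if_pos (by omega), if_pos (by omega), ← smul_sub,
              (hp n).smul_eq, abs_of_pos (dyadicWeight_pos n)]
            exact mul_le_mul_of_nonneg_left (hc n K i j hi hj) (dyadicWeight_pos n).le
        _ = (∑ n ∈ range K, dyadicWeight n) * (1 / 2) ^ K := (sum_mul _ _ _).symm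
        _ ≤ _ := mul_le_of_le_one_left (by positivity) (sum_dyadicWeight_le_one K)
    have h2 : ∑ n ∈ range (i + j), P (K + n) (block (K + n) (w i - w j)) ≤ 4 * (1 / 2) ^ K := by
      calc _ ≤ ∑ n ∈ range (i + j), dyadicWeight n * (4 * (1 / 2) ^ K) := by
            refine sum_le_sum fun n _ => ?_
            rw [map_sub]
            have h3 := (hp (K + n)).sub_le (block (K + n) (w i)) (block (K + n) (w j))
            have h4 := hbound (K + n) i
            have h5 := hbound (K + n) j
            rw [dyadicWeight_add] at h4 h5
            calc _ ≤ _ := h3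
              _ ≤ _ := add_le_add h4 h5
              _ = _ := by ring
        _ = (∑ n ∈ range (i + j), dyadicWeight n) * (4 * (1 / 2) ^ K) := (sum_mul _ _ _).symm
        _ ≤ _ := mul_le_of_le_one_left (by positivity) (sum_dyadicWeight_le_one _)
    have h3 := glueNorm_le_two_mul_blockSum hp (w i - w j)
    have h4 := blockSum_eq (fun n => (hp n).map_zero) hM
    rw [sum_range_add] at h4
    linarith
  refine ⟨w, fun ε hε => ?_, fun ε hε => ?_, fun ε hε => ?_⟩
  · obtain ⟨K, hK⟩ := exists_forall_mul_half_pow_lt 10 (by norm_num) hε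
    exact ⟨K, fun i j hi hj => (hCw K i j hi hj).trans_lt (hK K le_rfl)⟩
  · obtain ⟨K, hK⟩ := exists_forall_mul_half_pow_lt 5 (by norm_num) hε
    exact ⟨K, fun j hj => (hGw j).trans_lt (hK j hj)⟩
  · obtain ⟨K, hK⟩ := exists_forall_mul_half_pow_lt 2 (by norm_num) hε
    exact ⟨K, fun j hj => (hFw j).trans_lt (hK j hj)⟩

/-- The class of subsets of Baire space continuously reducible to `Y` is closed under
countable intersections. -/
theorem stmt9 (C : ℕ → Set (ℕ → ℕ)) (hC : ∀ n, ContReducibleToY (C n)) :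
    ContReducibleToY (⋂ n, C n) := by
  choose φ hφ hmem using hC
  refine ⟨fun x => glue fun n => φ n x, continuous_glue.comp (continuous_pi hφ), fun x => ?_⟩
  rw [Set.mem_iInter]
  exact ⟨fun h => glue_mem_Yset fun n => (hmem n x).1 (h n),
    fun h n => (hmem n x).2 (mem_Yset_of_glue_mem h n)⟩
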